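/- arXiv:0801.2549 — 3 statements merged into one kernel-verified Lean document; each statement's English description precedes it below -/
import Mathlib

section
/- Let δ > 0 and let f : B_δ → ℂ be a holomorphic 1-periodic function whose derivative ∂_θ f is bounded on B_δ. Then sup_{θ∈B_δ} |f(θ)| ≤ |∫₀¹ f(x) dx| + sup_{θ∈B_δ} |∂_θ f(θ)|. -/
noncomputable def distNearestInt (x : ℝ) : ℝ := |x - round x|

noncomputable def GammaA (α : ℝ) (N : ℕ) : ℝ :=
  sSup ((fun n : ℤ => (distNearestInt ((n : ℝ) * α))⁻¹) '' {n : ℤ | n ≠ 0 ∧ |n| ≤ (N : ℤ)})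

noncomputable def GammaAB (α β : ℝ) (N : ℕ) : ℝ :=
  sSup ((fun n : ℤ => (distNearestInt ((n : ℝ) * α - β))⁻¹) '' {n : ℤ | |n| ≤ (N : ℤ)})

def IsNonRationalPair (α β : ℝ) : Prop := ∀ k m : ℤ, (k : ℝ) * α - β ≠ (m : ℝ)

def BrjunoCond (α : ℝ) : Prop :=
  Summable (fun N : ℕ => Real.log (GammaA α (N + 1)) / ((N : ℝ) + 1) ^ 2)

def Strip (δ : ℝ) : Set ℂ := {θ : ℂ | |θ.im| < δ}

/-!
By Cauchy's theorem on a rectangle one period wide, whose vertical sides contribute equally, the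
mean of `f` over a period is the same on every horizontal line of the strip. So the mean over
`[0, 1]` is also the mean over the period starting at `θ` on the line through `θ`, where by the
mean value inequality `f` stays within `C` of `f θ`.
-/

open Complex MeasureTheory Set
open scoped Interval

theorem strip_eq_reProdIm (δ : ℝ) : Strip δ = univ ×ℂ Ioo (-δ) δ := by
  ext θ
  simp [Strip, mem_reProdIm, abs_lt]

theorem isOpen_strip (δ : ℝ) : IsOpen (Strip δ) :=
  strip_eq_reProdIm δ ▸ isOpen_univ.reProdIm isOpen_Ioo

theorem convex_strip (δ : ℝ) : Convex ℝ (Strip δ) := by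
  rw [strip_eq_reProdIm]
  exact (convex_univ.linear_preimage reLm).inter ((convex_Ioo (-δ) δ).linear_preimage imLm)

theorem add_mul_I_mem_strip_iff {δ x y : ℝ} : (x + y * I : ℂ) ∈ Strip δ ↔ |y| < δ := by
  simp [Strip]

theorem reProdIm_uIcc_zero_subset_strip {δ b : ℝ} (s : Set ℝ) (hb : |b| < δ) :
    s ×ℂ [[0, b]] ⊆ Strip δ := fun z hz => by
  have him : |z.im| ≤ |b| := by simpa using abs_sub_left_of_mem_uIcc hz.2
  exact him.trans_lt hb

theorem interval_average_mem_of_convex {E : Type*} [NormedAddCommGroup E] [NormedSpace ℝ E]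
    [CompleteSpace E] {s : Set E} {g : ℝ → E} {a b : ℝ} (hs : Convex ℝ s) (hsc : IsClosed s)
    (hab : a ≠ b) (hgs : ∀ x ∈ Ι a b, g x ∈ s) (hg : IntervalIntegrable g volume a b) :
    ⨍ x in a..b, g x ∈ s :=
  hs.set_average_mem hsc (by simpa [sub_eq_zero] using hab.symm) (by simp)
    (ae_restrict_of_forall_mem measurableSet_uIoc hgs) hg.def'

section HorizontalLines

variable {E : Type*} [NormedAddCommGroup E] [NormedSpace ℂ E] {f : ℂ → E}

theorem integral_horizontal_eq_of_vertical_sides_eq {a₀ a₁ b₀ b₁ : ℝ}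
    (hf : DifferentiableOn ℂ f ([[a₀, a₁]] ×ℂ [[b₀, b₁]]))
    (hsides : ∀ y ∈ [[b₀, b₁]], f (a₁ + y * I) = f (a₀ + y * I)) :
    ∫ x in a₀..a₁, f (x + b₀ * I) = ∫ x in a₀..a₁, f (x + b₁ * I) := by
  have hrect := integral_boundary_rect_eq_zero_of_differentiableOn f (a₀ + b₀ * I) (a₁ + b₁ * I)
    (by simpa using hf)
  have hvert : ∫ y in b₀..b₁, f (a₁ + y * I) = ∫ y in b₀..b₁, f (a₀ + y * I) :=
    intervalIntegral.integral_congr hsides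
  simpa [hvert, sub_eq_zero] using hrect

theorem interval_average_horizontal_eq {δ T b : ℝ} (hf : DifferentiableOn ℂ f (Strip δ))
    (hper : ∀ θ ∈ Strip δ, f (θ + T) = f θ) (a : ℝ) (hb : |b| < δ) :
    ⨍ x in a..a + T, f (x + b * I) = ⨍ x in 0..T, f x := by
  have hperiodic : Function.Periodic (fun x : ℝ => f (x + b * I)) T := fun x => by
    simpa [add_right_comm] using hper _ (add_mul_I_mem_strip_iff (x := x) |>.2 hb)
  have hrect : [[0, T]] ×ℂ [[0, b]] ⊆ Strip δ := reProdIm_uIcc_zero_subset_strip _ hb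
  have hsides : ∀ y ∈ [[0, b]], f (T + y * I) = f ((0 : ℝ) + y * I) := fun y hy => by
    have hmem : ((0 : ℝ) + y * I : ℂ) ∈ Strip δ := hrect (by simpa [mem_reProdIm] using hy)
    simpa [add_comm] using hper _ hmem
  have hshift := integral_horizontal_eq_of_vertical_sides_eq (hf.mono hrect) hsides
  simp only [interval_average_eq, add_sub_cancel_left, sub_zero]
  rw [hperiodic.intervalIntegral_add_eq a 0, zero_add, ← hshift]
  simp only [ofReal_zero, zero_mul, add_zero]

theorem stmt_4_general [CompleteSpace E] {δ T C : ℝ} (hT : 0 < T)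
    (hf : DifferentiableOn ℂ f (Strip δ)) (hper : ∀ θ ∈ Strip δ, f (θ + T) = f θ)
    (hC : ∀ θ ∈ Strip δ, ‖deriv f θ‖ ≤ C) {θ : ℂ} (hθ : θ ∈ Strip δ) :
    ‖f θ - ⨍ x in 0..T, f x‖ ≤ C * T := by
  have hline (x : ℝ) : (x + θ.im * I : ℂ) ∈ Strip δ := add_mul_I_mem_strip_iff.2 hθ
  have hcont : Continuous fun x : ℝ => f (x + θ.im * I) :=
    hf.continuousOn.comp_continuous (by fun_prop) hline
  have hnear : ∀ x ∈ Ι θ.re (θ.re + T),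
      f (x + θ.im * I) ∈ Metric.closedBall (f θ) (C * T) := fun x hx => by
    have hdist : ‖(x + θ.im * I : ℂ) - θ‖ ≤ T := by
      rw [← dist_eq_norm, dist_of_im_eq (by simp)]
      simpa [Real.dist_eq, abs_of_pos hT] using
        abs_sub_left_of_mem_uIcc (uIoc_subset_uIcc hx)
    rw [mem_closedBall_iff_norm]
    calc ‖f (x + θ.im * I) - f θ‖ ≤ C * ‖(x + θ.im * I : ℂ) - θ‖ :=
          (convex_strip δ).norm_image_sub_le_of_norm_deriv_le
            (fun z hz => hf.differentiableAt ((isOpen_strip δ).mem_nhds hz)) hC hθ (hline x)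
      _ ≤ C * T := mul_le_mul_of_nonneg_left hdist ((norm_nonneg _).trans (hC θ hθ))
  have hmean := interval_average_mem_of_convex (convex_closedBall (f θ) (C * T))
    Metric.isClosed_closedBall (by simpa using hT.ne') hnear (hcont.intervalIntegrable _ _)
  rwa [interval_average_horizontal_eq hf hper _ hθ, mem_closedBall_iff_norm'] at hmean

end HorizontalLines

/-- sup of a periodic holomorphic function on the strip is bounded by
the modulus of its mean plus the sup of its derivative. -/
theorem stmt_4 (δ : ℝ) (hδ : 0 < δ) (f : ℂ → ℂ)
    (hf : DifferentiableOn ℂ f (Strip δ))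
    (hper : ∀ θ ∈ Strip δ, f (θ + 1) = f θ)
    (C : ℝ) (hC : ∀ θ ∈ Strip δ, ‖deriv f θ‖ ≤ C) :
    ∀ θ ∈ Strip δ, ‖f θ‖ ≤ ‖∫ x in (0:ℝ)..1, f x‖ + C := by
  intro θ hθ
  have hdev : ‖f θ - ∫ x in (0:ℝ)..1, f x‖ ≤ C := by
    simpa only [interval_average_eq, sub_zero, inv_one, one_smul, mul_one] using
      stmt_4_general one_pos hf (by simpa using hper) hC hθ
  exact (norm_le_insert' _ _).trans (by gcongr)
end

section
/- There exists a universal constant C₂ > 0 with the following property. Let (α,β) be a non-rational pair of real numbers, δ > 0, N ≥ 1 an integer, and let f : B_δ → ℂ be a bounded holomorphic 1-periodic function. Then the trigonometric polynomial g(θ) = ∑_{|n|≤N} f̂(n) e^{2πinθ}/(e^{2πiβ} − e^{2πinα}) satisfies e^{2πiβ} g(θ) − g(θ+α) = f|_N(θ) for all θ, and one has the bounds ‖g‖_{B_δ} ≤ C₂ N Γ_{α,β}(N) ‖f‖_{B_δ} and ‖∂_θ g‖_{B_δ} ≤ C₂ N² Γ_{α,β}(N) ‖f‖_{B_δ}.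 -/
noncomputable def supNorm (f : ℂ → ℂ) (s : Set ℂ) : ℝ := sSup ((fun z => ‖f z‖) '' s)

noncomputable def fCoeff (f : ℂ → ℂ) (n : ℤ) : ℂ :=
  ∫ x in (0:ℝ)..1, f x * Complex.exp (-(2 * Real.pi * Complex.I * n * x))

/-- The truncation of f up to order N. -/
noncomputable def truncN (f : ℂ → ℂ) (N : ℕ) (θ : ℂ) : ℂ :=
  ∑ n ∈ Finset.Icc (-(N : ℤ)) (N : ℤ), fCoeff f n * Complex.exp (2 * Real.pi * Complex.I * n * θ)

/-!
By Cauchy's theorem the integral defining `f̂(n)` may be moved to the horizontal line through `θ`,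
where `|e^{-2πin·}|` is the constant `1 / |e^{2πinθ}|`; hence every Fourier mode `f̂(n) e^{2πinθ}`
is bounded on the strip by `‖f‖`, with no loss in the width. The small divisors satisfy
`|e^{2πiβ} - e^{2πinα}| ≥ 4 ‖nα - β‖` because a chord is at least `2 / π` times its arc. Each of the
`2N + 1 ≤ 3N` terms of `g` is thus at most `Γ ‖f‖ / 4`, and differentiating multiplies a term by at
most `2πN`.
-/

section Strip

open Complex
open scoped Real

lemma supNorm_nonneg (f : ℂ → ℂ) (s : Set ℂ) : 0 ≤ supNorm f s :=
  Real.sSup_nonneg (Set.forall_mem_image.2 fun _ _ => norm_nonneg _)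

lemma norm_le_supNorm {f : ℂ → ℂ} {s : Set ℂ} (hf : BddAbove ((fun z => ‖f z‖) '' s)) {z : ℂ}
    (hz : z ∈ s) : ‖f z‖ ≤ supNorm f s :=
  le_csSup hf (Set.mem_image_of_mem _ hz)

lemma supNorm_le {f : ℂ → ℂ} {s : Set ℂ} {B : ℝ} (hs : s.Nonempty) (hf : ∀ z ∈ s, ‖f z‖ ≤ B) :
    supNorm f s ≤ B :=
  csSup_le (hs.image _) (Set.forall_mem_image.2 hf)

lemma Strip_nonempty {δ : ℝ} (hδ : 0 < δ) : (Strip δ).Nonempty :=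
  ⟨0, by simpa [Strip] using hδ⟩

lemma integral_horizontal_eq_of_periodic {E : Type*} [NormedAddCommGroup E] [NormedSpace ℂ E]
    {δ : ℝ} {f : ℂ → E} (hf : DifferentiableOn ℂ f (Strip δ))
    (hper : ∀ θ ∈ Strip δ, f (θ + 1) = f θ) {y : ℝ} (hy : |y| < δ) :
    ∫ x in (0 : ℝ)..1, f x = ∫ x in (0 : ℝ)..1, f (x + y * I) := by
  have hmem : ∀ t ∈ Set.uIcc 0 y, |t| < δ := fun t ht => by
    simpa using (Set.abs_sub_left_of_mem_uIcc ht).trans_lt (by simpa using hy)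
  have hrect := integral_boundary_rect_eq_zero_of_differentiableOn f 0 (1 + y * I)
    (hf.mono fun z hz => hmem z.im (by simpa using hz.2))
  have hsides : ∫ t in (0 : ℝ)..y, f (1 + t * I) = ∫ t in (0 : ℝ)..y, f (t * I) :=
    intervalIntegral.integral_congr fun t ht => by
      simpa only [add_comm] using hper (t * I) (by simpa [Strip] using hmem t ht)
  simpa [hsides, sub_eq_zero] using hrect

variable {δ : ℝ} {f : ℂ → ℂ}

lemma fCoeff_eq_integral_horizontal (hf : DifferentiableOn ℂ f (Strip δ))
    (hper : ∀ θ ∈ Strip δ, f (θ + 1) = f θ) (n : ℤ) {y : ℝ} (hy : |y| < δ) :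
    fCoeff f n =
      ∫ x in (0 : ℝ)..1, f (x + y * I) * exp (-(2 * π * I * n * (x + y * I))) := by
  refine integral_horizontal_eq_of_periodic (f := fun z => f z * exp (-(2 * π * I * n * z)))
    (hf.mul (by fun_prop)) (fun z hz => ?_) hy
  have hexp : exp (-(2 * π * I * n * (z + 1))) = exp (-(2 * π * I * n * z)) :=
    exp_eq_exp_iff_exists_int.2 ⟨-n, by push_cast; ring⟩
  rw [hper z hz, hexp]

lemma norm_fCoeff_mul_exp_le_supNorm (hf : DifferentiableOn ℂ f (Strip δ))
    (hper : ∀ θ ∈ Strip δ, f (θ + 1) = f θ) (hbdd : BddAbove ((fun z => ‖f z‖) '' Strip δ))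
    (n : ℤ) {θ : ℂ} (hθ : θ ∈ Strip δ) :
    ‖fCoeff f n * exp (2 * π * I * n * θ)‖ ≤ supNorm f (Strip δ) := by
  rw [fCoeff_eq_integral_horizontal hf hper n hθ, ← intervalIntegral.integral_mul_const]
  suffices h : ∀ x : ℝ, ‖f (x + θ.im * I) * exp (-(2 * π * I * n * (x + θ.im * I))) *
      exp (2 * π * I * n * θ)‖ ≤ supNorm f (Strip δ) by
    simpa using intervalIntegral.norm_integral_le_of_norm_le_const (a := 0) (b := 1) fun x _ => h x
  intro x
  have hmodulus : ‖exp (-(2 * π * I * n * (x + θ.im * I))) * exp (2 * π * I * n * θ)‖ = 1 := by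
    rw [← exp_add, norm_exp]
    simp
  rw [mul_assoc, norm_mul, hmodulus, mul_one]
  exact norm_le_supNorm hbdd (by simpa [Strip] using hθ)

end Strip

section SmallDivisor

open Complex
open scoped Real

/-- The divisor `e^{2πiβ} - e^{2πinα}` by which the `n`-th Fourier coefficient is divided when
solving the twisted cohomological equation `e^{2πiβ} g(θ) - g(θ + α) = f(θ)`. -/
noncomputable def smallDivisor (α β : ℝ) (n : ℤ) : ℂ :=
  exp (2 * π * I * β) - exp (2 * π * I * n * α)

lemma four_mul_distNearestInt_le_norm_exp_sub_one (t : ℝ) :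
    4 * distNearestInt t ≤ ‖exp (2 * π * I * t) - 1‖ := by
  set r : ℝ := t - round t with hr
  have hreduce : exp (2 * π * I * t) = exp (I * (2 * π * r : ℝ)) :=
    exp_eq_exp_iff_exists_int.2 ⟨round t, by rw [hr]; push_cast; ring⟩
  have habs : |π * r| = π * |r| := by rw [abs_mul, abs_of_pos Real.pi_pos]
  have hchord : 2 / π * |π * r| ≤ |Real.sin (π * r)| := by
    refine Real.mul_abs_le_abs_sin ?_
    rw [habs, div_eq_mul_one_div]
    gcongr
    exact abs_sub_round t
  calc 4 * distNearestInt t = 2 * (2 / π * |π * r|) := by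
        rw [habs, distNearestInt]
        field_simp
        ring
    _ ≤ 2 * |Real.sin (π * r)| := by gcongr
    _ = ‖exp (2 * π * I * t) - 1‖ := by
        rw [hreduce, norm_exp_I_mul_ofReal_sub_one, mul_assoc, mul_div_cancel_left₀ _ two_ne_zero,
          norm_mul, Real.norm_ofNat, Real.norm_eq_abs]

lemma four_mul_distNearestInt_le_norm_smallDivisor (α β : ℝ) (n : ℤ) :
    4 * distNearestInt (n * α - β) ≤ ‖smallDivisor α β n‖ := by
  have hfactor : smallDivisor α β n =
      -(exp ((2 * π * β : ℝ) * I) * (exp (2 * π * I * (n * α - β : ℝ)) - 1)) := by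
    rw [smallDivisor, mul_sub, ← exp_add, mul_one, neg_sub]
    push_cast
    ring_nf
  rw [hfactor, norm_neg, norm_mul, norm_exp_ofReal_mul_I, one_mul]
  exact four_mul_distNearestInt_le_norm_exp_sub_one _

lemma GammaAB_nonneg (α β : ℝ) (N : ℕ) : 0 ≤ GammaAB α β N :=
  Real.sSup_nonneg (Set.forall_mem_image.2 fun _ _ => inv_nonneg.2 (abs_nonneg _))

lemma inv_distNearestInt_le_GammaAB (α β : ℝ) {N : ℕ} {n : ℤ} (hn : |n| ≤ (N : ℤ)) :
    (distNearestInt (n * α - β))⁻¹ ≤ GammaAB α β N := by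
  have hfin : {n : ℤ | |n| ≤ (N : ℤ)}.Finite :=
    (Set.finite_Icc (-(N : ℤ)) N).subset fun _ hm => abs_le.1 hm
  exact le_csSup (hfin.image _).bddAbove ⟨n, hn, rfl⟩

namespace IsNonRationalPair

variable {α β : ℝ}

lemma distNearestInt_pos (h : IsNonRationalPair α β) (n : ℤ) : 0 < distNearestInt (n * α - β) :=
  abs_pos.2 (sub_ne_zero.2 (h n _))

lemma smallDivisor_ne_zero (h : IsNonRationalPair α β) (n : ℤ) : smallDivisor α β n ≠ 0 :=
  norm_pos_iff.1 <| (mul_pos four_pos (h.distNearestInt_pos n)).trans_le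
    (four_mul_distNearestInt_le_norm_smallDivisor α β n)

lemma inv_norm_smallDivisor_le (h : IsNonRationalPair α β) {N : ℕ} {n : ℤ}
    (hn : |n| ≤ (N : ℤ)) :
    ‖smallDivisor α β n‖⁻¹ ≤ GammaAB α β N / 4 :=
  calc ‖smallDivisor α β n‖⁻¹ ≤ (4 * distNearestInt (n * α - β))⁻¹ :=
        inv_anti₀ (mul_pos four_pos (h.distNearestInt_pos n))
          (four_mul_distNearestInt_le_norm_smallDivisor α β n)
    _ = (distNearestInt (n * α - β))⁻¹ / 4 := by rw [mul_inv_rev, div_eq_mul_inv]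
    _ ≤ GammaAB α β N / 4 := by gcongr; exact inv_distNearestInt_le_GammaAB α β hn

lemma norm_fCoeff_div_smallDivisor_mul_exp_le (h : IsNonRationalPair α β) {δ : ℝ} {f : ℂ → ℂ}
    (hf : DifferentiableOn ℂ f (Strip δ)) (hper : ∀ θ ∈ Strip δ, f (θ + 1) = f θ)
    (hbdd : BddAbove ((fun z => ‖f z‖) '' Strip δ)) {θ : ℂ} (hθ : θ ∈ Strip δ) {N : ℕ} {n : ℤ}
    (hn : |n| ≤ (N : ℤ)) :
    ‖fCoeff f n / smallDivisor α β n * exp (2 * π * I * n * θ)‖ ≤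
      GammaAB α β N / 4 * supNorm f (Strip δ) := by
  rw [div_mul_eq_mul_div, norm_div, div_eq_inv_mul]
  exact mul_le_mul (h.inv_norm_smallDivisor_le hn)
    (norm_fCoeff_mul_exp_le_supNorm hf hper hbdd n hθ) (norm_nonneg _)
    (div_nonneg (GammaAB_nonneg α β N) four_pos.le)

end IsNonRationalPair

end SmallDivisor

section TrigPoly

open Complex
open scoped Real

/-- The trigonometric polynomial `∑_{|n| ≤ N} c_n e^{2πinθ}`, as a function on the complex plane.
The coefficients are indexed by all of `ℤ` to match `fCoeff`; those with `|n| > N` are ignored. -/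
noncomputable def trigPoly (c : ℤ → ℂ) (N : ℕ) (θ : ℂ) : ℂ :=
  ∑ n ∈ Finset.Icc (-(N : ℤ)) N, c n * exp (2 * π * I * n * θ)

lemma mul_trigPoly_sub_trigPoly_add (c : ℤ → ℂ) (N : ℕ) (a τ θ : ℂ) :
    a * trigPoly c N θ - trigPoly c N (θ + τ) =
      trigPoly (fun n => c n * (a - exp (2 * π * I * n * τ))) N θ := by
  simp only [trigPoly, Finset.mul_sum, ← Finset.sum_sub_distrib, mul_add, exp_add]
  exact Finset.sum_congr rfl fun n _ => by ring

lemma deriv_trigPoly (c : ℤ → ℂ) (N : ℕ) :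
    deriv (trigPoly c N) = trigPoly (fun n => 2 * π * I * n * c n) N := by
  funext θ
  refine (HasDerivAt.fun_sum fun n _ => ?_).deriv
  refine (((hasDerivAt_id' θ).const_mul (2 * π * I * n)).cexp.const_mul (c n)).congr_deriv ?_
  ring

variable {c : ℤ → ℂ} {N : ℕ} {θ : ℂ} {B : ℝ}

lemma norm_trigPoly_le (hc : ∀ n : ℤ, |n| ≤ N → ‖c n * exp (2 * π * I * n * θ)‖ ≤ B) :
    ‖trigPoly c N θ‖ ≤ (2 * N + 1) * B := by
  have hcard : (Finset.Icc (-(N : ℤ)) N).card = 2 * N + 1 := by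
    rw [Int.card_Icc]
    omega
  refine (norm_sum_le_of_le _ fun n hn => hc n (abs_le.2 (Finset.mem_Icc.1 hn))).trans_eq ?_
  rw [Finset.sum_const, hcard, nsmul_eq_mul]
  push_cast
  rfl

lemma norm_deriv_trigPoly_le (hc : ∀ n : ℤ, |n| ≤ N → ‖c n * exp (2 * π * I * n * θ)‖ ≤ B) :
    ‖deriv (trigPoly c N) θ‖ ≤ (2 * N + 1) * (2 * π * N * B) := by
  rw [deriv_trigPoly]
  refine norm_trigPoly_le fun n hn => ?_
  have hfreq : ‖2 * π * I * n‖ ≤ 2 * π * N := by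
    have hnN : |(n : ℝ)| ≤ N := mod_cast hn
    simp only [norm_mul, norm_ofNat, norm_real, norm_I, norm_intCast, mul_one, Real.norm_eq_abs,
      abs_of_pos Real.pi_pos]
    gcongr
  rw [mul_assoc, norm_mul]
  exact mul_le_mul hfreq (hc n hn) (norm_nonneg _) (by positivity)

end TrigPoly

/-- solution and estimates for the truncated twisted cohomological equation
e^{2πiβ} g(θ) − g(θ+α) = f|_N(θ). -/
theorem stmt_8 :
    ∃ C₂ : ℝ, 0 < C₂ ∧
      ∀ (α β : ℝ), IsNonRationalPair α β →
        ∀ (δ : ℝ), 0 < δ →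
          ∀ (N : ℕ), 1 ≤ N →
            ∀ f : ℂ → ℂ,
              DifferentiableOn ℂ f (Strip δ) →
              (∀ θ ∈ Strip δ, f (θ + 1) = f θ) →
              BddAbove ((fun z => ‖f z‖) '' Strip δ) →
              ∀ g : ℂ → ℂ,
                (g = fun θ => ∑ n ∈ Finset.Icc (-(N : ℤ)) (N : ℤ),
                    fCoeff f n * Complex.exp (2 * Real.pi * Complex.I * n * θ) /
                      (Complex.exp (2 * Real.pi * Complex.I * β) -
                        Complex.exp (2 * Real.pi * Complex.I * n * α))) →
                (∀ θ : ℂ,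
                    Complex.exp (2 * Real.pi * Complex.I * β) * g θ - g (θ + α) = truncN f N θ) ∧
                  supNorm g (Strip δ) ≤ C₂ * N * GammaAB α β N * supNorm f (Strip δ) ∧
                  supNorm (deriv g) (Strip δ) ≤ C₂ * N ^ 2 * GammaAB α β N * supNorm f (Strip δ) := by
  refine ⟨3 / 2 * Real.pi, by positivity, fun α β hαβ δ hδ N hN f hf hper hbdd g hg => ?_⟩
  obtain rfl : g = trigPoly (fun n => fCoeff f n / smallDivisor α β n) N :=
    hg.trans (funext fun θ => Finset.sum_congr rfl fun n _ => (div_mul_eq_mul_div _ _ _).symm)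
  have hmode {θ : ℂ} (hθ : θ ∈ Strip δ) (n : ℤ) (hn : |n| ≤ (N : ℤ)) :=
    hαβ.norm_fCoeff_div_smallDivisor_mul_exp_le hf hper hbdd hθ hn
  have hΓ : 0 ≤ GammaAB α β N := GammaAB_nonneg α β N
  have hM : 0 ≤ supNorm f (Strip δ) := supNorm_nonneg f _
  have hcount : (2 * N + 1 : ℝ) ≤ 3 * N := by norm_cast; lia
  refine ⟨fun θ => ?_, supNorm_le (Strip_nonempty hδ) fun θ hθ => ?_,
    supNorm_le (Strip_nonempty hδ) fun θ hθ => ?_⟩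
  · rw [mul_trigPoly_sub_trigPoly_add]
    exact Finset.sum_congr rfl fun n _ =>
      congrArg (· * _) (div_mul_cancel₀ _ (hαβ.smallDivisor_ne_zero n))
  · calc _ ≤ 3 * N * (GammaAB α β N / 4 * supNorm f (Strip δ)) :=
          (norm_trigPoly_le (hmode hθ)).trans (by gcongr)
      _ = 3 / 4 * N * GammaAB α β N * supNorm f (Strip δ) := by ring
      _ ≤ _ := by gcongr; linarith [Real.two_le_pi]
  · calc _ ≤ 3 * N * (2 * Real.pi * N * (GammaAB α β N / 4 * supNorm f (Strip δ))) :=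
          (norm_deriv_trigPoly_le (hmode hθ)).trans (by gcongr)
      _ = _ := by ring
end

section
/- Let (α,β) be a pair of real numbers satisfying condition B₁. Then there exists a constant K₂ > 0, depending only on (α,β), such that for every ℵ > 2 the following holds. Set A_n = Γ_{α,β}(2^n), B_n = Γ_α(2^n), l_n = e^{−n²}/(16 ℵ A_n B_n 2^n) and w_n = l_n/(ℵ 4^n A_n). Then there exists a sequence of real positive numbers d_n⁰ > 0 (n ≥ 0) such that w_{n+1}/4 = w_n ℵ e^{−2π 2^n d_n⁰}/d_n⁰ for every n ≥ 0, and ∑_{n≥0} d_n⁰ ≤ K₂ (1 + log ℵ). -/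
/-- Condition B₁ for a pair (α,β). -/
def BrjunoPairCond (α β : ℝ) : Prop :=
  Irrational α ∧ IsNonRationalPair α β ∧ BrjunoCond α ∧
    Summable (fun n : ℕ => Real.log (GammaAB α β (n + 1)) / ((n : ℝ) + 1) ^ 2)

/-!
The recursion for `w` asks for a solution `d` of `d * exp (a * d) = R` with `a = 2π 2ⁿ` and
`R = 4 ℵ wₙ / wₙ₊₁`. The left-hand side increases from `0` and reaches `R` no later than at
`d = (1 + log⁺ (a * R)) / a`. Since `a * R` is, up to a factor growing exponentially in `n`, at most
`ℵ Aₙ₊₁² Bₙ₊₁`, this solution is `O((n + 1 + log⁺ ℵ + log Aₙ₊₁ + log Bₙ₊₁) / 2ⁿ)`. The Brjuno series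
of the nondecreasing functions `Γ_α` and `Γ_{α,β}`, condensed along dyadic blocks, make the sum
finite.
-/

open Real Finset

section Gamma

variable {α β : ℝ}

theorem distNearestInt_nonneg (x : ℝ) : 0 ≤ distNearestInt x :=
  abs_nonneg _

theorem one_le_inv_distNearestInt {x : ℝ} (hx : ∀ m : ℤ, x ≠ m) : 1 ≤ (distNearestInt x)⁻¹ :=
  (one_le_inv₀ (abs_pos.mpr (sub_ne_zero.mpr (hx _)))).mpr
    ((abs_sub_round x).trans (by norm_num))

theorem finite_setOf_abs_le (N : ℕ) : {n : ℤ | |n| ≤ (N : ℤ)}.Finite :=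
  (Set.finite_Icc (-(N : ℤ)) N).subset fun _ hn => abs_le.mp hn

theorem finite_setOf_ne_zero_and_abs_le (N : ℕ) : {n : ℤ | n ≠ 0 ∧ |n| ≤ (N : ℤ)}.Finite :=
  (finite_setOf_abs_le N).subset fun _ hn => hn.2

-- Nonnegativity of `f` covers `S = ∅`, where the supremum is `0`.
theorem sSup_image_mono_of_nonneg {ι : Type*} {f : ι → ℝ} (hf : ∀ i, 0 ≤ f i) {S T : Set ι}
    (hST : S ⊆ T) (hT : T.Finite) : sSup (f '' S) ≤ sSup (f '' T) := by
  refine Real.sSup_le ?_ (Real.sSup_nonneg (Set.forall_mem_image.mpr fun i _ => hf i))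
  exact Set.forall_mem_image.mpr fun i hi => le_csSup (hT.image f).bddAbove ⟨i, hST hi, rfl⟩

theorem GammaA_monotone (α : ℝ) : Monotone (GammaA α) := fun _ N hMN =>
  sSup_image_mono_of_nonneg (fun _ => inv_nonneg.mpr (distNearestInt_nonneg _))
    (fun _ hn => ⟨hn.1, hn.2.trans (Nat.cast_le.mpr hMN)⟩) (finite_setOf_ne_zero_and_abs_le N)

theorem GammaAB_monotone (α β : ℝ) : Monotone (GammaAB α β) := fun _ N hMN =>
  sSup_image_mono_of_nonneg (fun _ => inv_nonneg.mpr (distNearestInt_nonneg _))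
    (fun n (hn : |n| ≤ _) => hn.trans (Nat.cast_le.mpr hMN)) (finite_setOf_abs_le N)

theorem one_le_GammaA (hα : Irrational α) {N : ℕ} (hN : 1 ≤ N) : 1 ≤ GammaA α N := by
  have hx : ∀ m : ℤ, ((1 : ℤ) : ℝ) * α ≠ m := fun m => by simpa using hα.ne_int m
  refine (one_le_inv_distNearestInt hx).trans ?_
  exact le_csSup ((finite_setOf_ne_zero_and_abs_le N).image _).bddAbove
    ⟨1, ⟨one_ne_zero, by simpa using hN⟩, rfl⟩

theorem one_le_GammaAB (h : IsNonRationalPair α β) (N : ℕ) : 1 ≤ GammaAB α β N :=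
  (one_le_inv_distNearestInt (h 0)).trans <|
    le_csSup ((finite_setOf_abs_le N).image _).bddAbove ⟨0, by simp, rfl⟩

end Gamma

section Condensation

theorem sum_range_sum_Ico {M : Type*} [AddCommMonoid M] (f : ℕ → M) {u : ℕ → ℕ} (hu : Monotone u)
    (n : ℕ) : ∑ k ∈ range n, ∑ i ∈ Ico (u k) (u (k + 1)), f i = ∑ i ∈ Ico (u 0) (u n), f i := by
  induction n with
  | zero => simp
  | succ n ih =>
    rw [sum_range_succ, ih, sum_Ico_consecutive f (hu n.zero_le) (hu n.le_succ)]

theorem summable_sum_Ico {f : ℕ → ℝ} (hf : Summable f) (hf0 : ∀ i, 0 ≤ f i) {u : ℕ → ℕ}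
    (hu : Monotone u) : Summable fun k => ∑ i ∈ Ico (u k) (u (k + 1)), f i :=
  summable_of_sum_range_le (fun _ => sum_nonneg fun i _ => hf0 i) fun n =>
    (sum_range_sum_Ico f hu n).trans_le (hf.sum_le_tsum _ fun i _ => hf0 i)

variable {g : ℕ → ℝ}

theorem div_two_pow_le_sum_Ico (hg1 : 0 ≤ g 1) (hg : MonotoneOn g (Set.Ici 1)) (p k : ℕ) :
    g (2 ^ k) / (2 ^ k) ^ p ≤
      2 ^ (p + 1) * ∑ N ∈ Ico (2 ^ k) (2 ^ (k + 1)), g N / (N : ℝ) ^ (p + 1) := by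
  have hpow : 1 ≤ 2 ^ k := Nat.one_le_two_pow
  have hterm : ∀ N ∈ Ico (2 ^ k) (2 ^ (k + 1)),
      g (2 ^ k) / (2 ^ (k + 1)) ^ (p + 1) ≤ g N / (N : ℝ) ^ (p + 1) := by
    intro N hN
    obtain ⟨hkN, hNk⟩ := Finset.mem_Ico.mp hN
    have hN1 : 1 ≤ N := hpow.trans hkN
    have : (0 : ℝ) < N := by exact_mod_cast hN1
    have hN_le : (N : ℝ) ≤ 2 ^ (k + 1) := by exact_mod_cast hNk.le
    exact div_le_div₀ (hg1.trans (hg Set.self_mem_Ici hN1 hN1)) (hg hpow hN1 hkN)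
      (by positivity) (by gcongr)
  have hcard : #(Ico (2 ^ k) (2 ^ (k + 1))) = 2 ^ k := by
    rw [Nat.card_Ico, pow_succ]; omega
  have hsum := card_nsmul_le_sum _ _ _ hterm
  rw [hcard, nsmul_eq_mul] at hsum
  calc g (2 ^ k) / (2 ^ k) ^ p
      = 2 ^ (p + 1) * (((2 ^ k : ℕ) : ℝ) * (g (2 ^ k) / (2 ^ (k + 1)) ^ (p + 1))) := by
        rw [pow_succ (2 : ℝ) k, mul_pow, pow_succ ((2 : ℝ) ^ k) p]
        push_cast
        field_simp
    _ ≤ _ := by gcongr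

-- Mathlib's condensation test does not apply: `g N / N ^ (p + 1)` need not be antitone.
theorem summable_div_two_pow_of_monotoneOn (hg1 : 0 ≤ g 1) (hg : MonotoneOn g (Set.Ici 1)) {p : ℕ}
    (hs : Summable fun N : ℕ => g N / (N : ℝ) ^ (p + 1)) :
    Summable fun n : ℕ => g (2 ^ n) / (2 ^ n) ^ p := by
  have hg0 : ∀ N, 1 ≤ N → 0 ≤ g N := fun N hN => hg1.trans (hg Set.self_mem_Ici hN hN)
  have hterm0 : ∀ N : ℕ, 0 ≤ g N / (N : ℝ) ^ (p + 1) := by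
    rintro (_ | N)
    · simp
    · exact div_nonneg (hg0 _ N.succ_pos) (by positivity)
  exact ((summable_sum_Ico hs hterm0 (pow_right_mono₀ one_le_two)).mul_left _).of_nonneg_of_le
    (fun n => div_nonneg (hg0 _ Nat.one_le_two_pow) (by positivity))
    (div_two_pow_le_sum_Ico hg1 hg p)

theorem summable_log_two_pow_div {Γ : ℕ → ℝ} (hΓ1 : 1 ≤ Γ 1) (hΓ : Monotone Γ)
    (hs : Summable fun N : ℕ => log (Γ (N + 1)) / ((N : ℝ) + 1) ^ 2) :
    Summable fun n : ℕ => log (Γ (2 ^ n)) / 2 ^ n := by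
  have hlog : MonotoneOn (fun N => log (Γ N)) (Set.Ici 1) := fun M hM N _ hMN =>
    log_le_log (one_pos.trans_le (hΓ1.trans (hΓ hM))) (hΓ hMN)
  have hs' : Summable fun N : ℕ => log (Γ N) / (N : ℝ) ^ (1 + 1) :=
    (summable_nat_add_iff 1).mp (by simpa using hs)
  simpa using summable_div_two_pow_of_monotoneOn (log_nonneg hΓ1) hlog hs'

end Condensation

section ExponentialEquation

theorem exists_pos_mul_exp_eq {a R : ℝ} (ha : 0 < a) (hR : 0 < R) :
    ∃ d : ℝ, 0 < d ∧ d * exp (a * d) = R ∧ d ≤ (1 + log⁺ (a * R)) / a := by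
  have hlog : 0 ≤ log⁺ (a * R) := posLog_nonneg
  set U := (1 + log⁺ (a * R)) / a with hU
  have hU0 : 0 ≤ U := by positivity
  have haR : a * R ≤ exp (a * U) := by
    rw [← log_le_iff_le_exp (by positivity), hU, mul_div_cancel₀ _ ha.ne']
    exact (le_max_right 0 _).trans (le_add_of_nonneg_left zero_le_one)
  have hRU : R ≤ U * exp (a * U) :=
    calc R = 1 / a * (a * R) := by field_simp
      _ ≤ U * exp (a * U) := by
        gcongr
        rw [hU]
        gcongr
        exact le_add_of_nonneg_right hlog
  obtain ⟨d, ⟨hd0, hdU⟩, hd⟩ := intermediate_value_Icc hU0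
    (f := fun d => d * exp (a * d)) (by fun_prop) ⟨by simpa using hR.le, hRU⟩
  have hd_ne : d ≠ 0 := by
    rintro rfl
    exact hR.ne (by simpa using hd)
  exact ⟨d, hd0.lt_of_ne' hd_ne, hd, hdU⟩

theorem exists_pos_eq_mul_exp_neg_div {a u v : ℝ} (ha : 0 < a) (hu : 0 < u) (hv : 0 < v) :
    ∃ d : ℝ, 0 < d ∧ v = u * exp (-(a * d)) / d ∧ d ≤ (1 + log⁺ (a * (u / v))) / a := by
  obtain ⟨d, hd0, hd, hdU⟩ := exists_pos_mul_exp_eq ha (div_pos hu hv)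
  refine ⟨d, hd0, ?_, hdU⟩
  rw [eq_div_iff hv.ne'] at hd
  rw [← hd, exp_neg]
  field_simp

end ExponentialEquation

theorem summable_affine_div_two_pow (a b : ℝ) : Summable fun n : ℕ => (a + n * b) / 2 ^ n := by
  have hgeo : Summable fun n : ℕ => (1 / 2 : ℝ) ^ n := summable_geometric_two
  have hngeo : Summable fun n : ℕ => (n : ℝ) * (1 / 2 : ℝ) ^ n := by
    simpa using summable_pow_mul_geometric_of_norm_lt_one (R := ℝ) 1 (r := 1 / 2) (by norm_num)
  refine ((hgeo.mul_left a).add (hngeo.mul_left b)).congr fun n => ?_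
  rw [one_div_pow]
  ring

/-- The part of the upper bound for the loss `dₙ` that does not depend on `ℵ`. Its constants come
from the estimate `2π 2ⁿ · 4 ℵ wₙ / wₙ₊₁ ≤ 64 π e · (2 e²)ⁿ · ℵ · Aₙ₊₁² Bₙ₊₁`. -/
noncomputable def lossMajorant (A B : ℕ → ℝ) (n : ℕ) : ℝ :=
  (1 + log⁺ (64 * π * exp 1) + n * log⁺ (2 * exp 2) +
    (2 * log (A (n + 1)) + log (B (n + 1)))) / 2 ^ n

section LossMajorant

variable {A B : ℕ → ℝ}

theorem lossMajorant_nonneg {n : ℕ} (hA : 1 ≤ A (n + 1)) (hB : 1 ≤ B (n + 1)) :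
    0 ≤ lossMajorant A B n := by
  have := log_nonneg hA
  have := log_nonneg hB
  have := posLog_nonneg (x := 64 * π * exp 1)
  have := posLog_nonneg (x := 2 * exp 2)
  unfold lossMajorant
  positivity

theorem summable_lossMajorant (hA : Summable fun n => log (A n) / 2 ^ n)
    (hB : Summable fun n => log (B n) / 2 ^ n) : Summable (lossMajorant A B) := by
  have hA' := ((summable_nat_add_iff 1).mpr hA).mul_left 4
  have hB' := ((summable_nat_add_iff 1).mpr hB).mul_left 2
  refine ((summable_affine_div_two_pow (1 + log⁺ (64 * π * exp 1)) (log⁺ (2 * exp 2))).add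
    (hA'.add hB')).congr fun n => ?_
  rw [lossMajorant, pow_succ]
  field_simp
  ring

end LossMajorant

/-- The width `wₙ = lₙ / (ℵ 4ⁿ Aₙ)` with `lₙ = exp (-n²) / (16 ℵ Aₙ Bₙ 2ⁿ)`, where `A` and `B` stand
for the values of `Γ_{α,β}` and `Γ_α` along the powers of two. -/
noncomputable def dyadicWidth (A B : ℕ → ℝ) (aleph : ℝ) (n : ℕ) : ℝ :=
  exp (-(n : ℝ) ^ 2) / (16 * aleph * A n * B n * 2 ^ n) / (aleph * 4 ^ n * A n)

section DyadicWidth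

variable {A B : ℕ → ℝ} {aleph : ℝ}

theorem dyadicWidth_pos (haleph : 0 < aleph) {n : ℕ} (hA : 0 < A n) (hB : 0 < B n) :
    0 < dyadicWidth A B aleph n := by
  unfold dyadicWidth
  positivity

theorem dyadicWidth_ratio (haleph : aleph ≠ 0) {n : ℕ} (hA : A n ≠ 0) (hA' : A (n + 1) ≠ 0)
    (hB : B n ≠ 0) (hB' : B (n + 1) ≠ 0) :
    dyadicWidth A B aleph n * aleph / (dyadicWidth A B aleph (n + 1) / 4) =
      32 * exp (2 * n + 1) * aleph * (A (n + 1) ^ 2 * B (n + 1)) / (A n ^ 2 * B n) := by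
  have hexp : exp (-(n : ℝ) ^ 2) = exp (2 * n + 1) * exp (-((n + 1 : ℕ) : ℝ) ^ 2) := by
    rw [← exp_add]
    congr 1
    push_cast
    ring
  unfold dyadicWidth
  rw [hexp]
  field_simp
  ring

theorem posLog_dyadicWidth_ratio_le (haleph : 0 < aleph) (hA : ∀ n, 1 ≤ A n) (hB : ∀ n, 1 ≤ B n)
    (n : ℕ) :
    log⁺ (2 * π * 2 ^ n * (dyadicWidth A B aleph n * aleph / (dyadicWidth A B aleph (n + 1) / 4))) ≤
      log⁺ (64 * π * exp 1) + n * log⁺ (2 * exp 2) + log⁺ aleph +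
        (2 * log (A (n + 1)) + log (B (n + 1))) := by
  have hA0 : ∀ n, 0 < A n := fun n => one_pos.trans_le (hA n)
  have hB0 : ∀ n, 0 < B n := fun n => one_pos.trans_le (hB n)
  have hA' := hA0 (n + 1)
  have hB' := hB0 (n + 1)
  have hexp : exp (2 * n + 1) = exp 1 * exp 2 ^ n := by
    rw [← exp_nat_mul, ← exp_add]
    ring_nf
  have hden : 1 ≤ A n ^ 2 * B n := one_le_mul_of_one_le_of_one_le (one_le_pow₀ (hA n)) (hB n)
  have hnum : log⁺ (A (n + 1) ^ 2 * B (n + 1)) = 2 * log (A (n + 1)) + log (B (n + 1)) := by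
    have h1 : 1 ≤ A (n + 1) ^ 2 * B (n + 1) :=
      one_le_mul_of_one_le_of_one_le (one_le_pow₀ (hA _)) (hB _)
    rw [posLog_eq_log (h1.trans (le_abs_self _)), log_mul (by positivity) hB'.ne', log_pow]
    norm_cast
  rw [dyadicWidth_ratio haleph.ne' (hA0 n).ne' hA'.ne' (hB0 n).ne' hB'.ne']
  calc _ = log⁺ (64 * π * exp 1 * (2 * exp 2) ^ n * aleph * (A (n + 1) ^ 2 * B (n + 1)) /
        (A n ^ 2 * B n)) := by
        rw [hexp, mul_pow]
        ring_nf
    _ ≤ log⁺ (64 * π * exp 1 * (2 * exp 2) ^ n * aleph * (A (n + 1) ^ 2 * B (n + 1))) :=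
        posLog_le_posLog (by have := hA0 n; have := hB0 n; positivity)
          (div_le_self (by positivity) hden)
    _ ≤ _ := by
        grw [posLog_mul, posLog_mul, posLog_mul, posLog_pow, hnum]

theorem exists_loss_le (haleph : 0 < aleph) (hA : ∀ n, 1 ≤ A n) (hB : ∀ n, 1 ≤ B n) (n : ℕ) :
    ∃ d : ℝ, 0 < d ∧
      dyadicWidth A B aleph (n + 1) / 4 =
        dyadicWidth A B aleph n * aleph * exp (-(2 * π * 2 ^ n * d)) / d ∧
      d ≤ lossMajorant A B n + log⁺ aleph / 2 ^ n := by
  have hw : ∀ n, 0 < dyadicWidth A B aleph n := fun n =>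
    dyadicWidth_pos haleph (one_pos.trans_le (hA n)) (one_pos.trans_le (hB n))
  obtain ⟨d, hd0, hd, hdU⟩ := exists_pos_eq_mul_exp_neg_div
    (show 0 < 2 * π * 2 ^ n by positivity) (mul_pos (hw n) haleph)
    (div_pos (hw (n + 1)) four_pos)
  refine ⟨d, hd0, hd, hdU.trans ?_⟩
  have hlog := posLog_dyadicWidth_ratio_le haleph hA hB n
  set logRatio := log⁺ (2 * π * 2 ^ n *
    (dyadicWidth A B aleph n * aleph / (dyadicWidth A B aleph (n + 1) / 4)))
  have : 0 ≤ logRatio := posLog_nonneg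
  calc (1 + logRatio) / (2 * π * 2 ^ n)
      ≤ (1 + logRatio) / 2 ^ n := by
        gcongr
        exact le_mul_of_one_le_left (by positivity) (by linarith [pi_gt_three])
    _ ≤ lossMajorant A B n + log⁺ aleph / 2 ^ n := by
        rw [lossMajorant, ← add_div]
        exact div_le_div_of_nonneg_right (by linarith) (by positivity)

end DyadicWidth

theorem exists_summable_loss {A B : ℕ → ℝ} (hA : ∀ n, 1 ≤ A n) (hB : ∀ n, 1 ≤ B n)
    (hsA : Summable fun n => log (A n) / 2 ^ n) (hsB : Summable fun n => log (B n) / 2 ^ n) :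
    ∃ K : ℝ, 0 < K ∧ ∀ aleph : ℝ, 0 < aleph → ∃ d : ℕ → ℝ, (∀ n, 0 < d n) ∧
      (∀ n, dyadicWidth A B aleph (n + 1) / 4 =
        dyadicWidth A B aleph n * aleph * exp (-(2 * π * 2 ^ n * d n)) / d n) ∧
      Summable d ∧ ∑' n, d n ≤ K * (1 + log⁺ aleph) := by
  have hc := summable_lossMajorant hsA hsB
  have hc0 : 0 ≤ ∑' n, lossMajorant A B n :=
    tsum_nonneg fun n => lossMajorant_nonneg (hA (n + 1)) (hB (n + 1))
  refine ⟨∑' n, lossMajorant A B n + 2, by positivity, fun aleph haleph => ?_⟩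
  choose d hd0 hd hdU using exists_loss_le haleph hA hB
  have hgeo : HasSum (fun n : ℕ => log⁺ aleph / 2 ^ n) (log⁺ aleph * 2) := by
    simpa [div_eq_mul_inv] using hasSum_geometric_two.mul_left (log⁺ aleph)
  have hmaj := hc.hasSum.add hgeo
  have hds : Summable d := hmaj.summable.of_nonneg_of_le (fun n => (hd0 n).le) hdU
  refine ⟨d, hd0, hd, hds, ?_⟩
  calc ∑' n, d n ≤ ∑' n, lossMajorant A B n + log⁺ aleph * 2 := hasSum_le hdU hds.hasSum hmaj
    _ ≤ (∑' n, lossMajorant A B n + 2) * (1 + log⁺ aleph) := by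
      nlinarith [mul_nonneg hc0 (posLog_nonneg (x := aleph))]

theorem stmt_12_general (α β : ℝ) (hB1 : BrjunoPairCond α β) :
    ∃ K₂ : ℝ, 0 < K₂ ∧
      ∀ aleph : ℝ, 0 < aleph →
        ∀ l w : ℕ → ℝ,
          (∀ n : ℕ, l n = Real.exp (-(n : ℝ) ^ 2) /
              (16 * aleph * GammaAB α β (2 ^ n) * GammaA α (2 ^ n) * 2 ^ n)) →
          (∀ n : ℕ, w n = l n / (aleph * 4 ^ n * GammaAB α β (2 ^ n))) →
          ∃ d : ℕ → ℝ, (∀ n : ℕ, 0 < d n) ∧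
            (∀ n : ℕ, w (n + 1) / 4 =
              w n * aleph * Real.exp (-(2 * Real.pi * 2 ^ n * d n)) / d n) ∧
            Summable d ∧ (∑' n : ℕ, d n) ≤ K₂ * (1 + log⁺ aleph) := by
  obtain ⟨hα, hαβ, hBrjuno, hBrjunoPair⟩ := hB1
  obtain ⟨K, hK, hloss⟩ := exists_summable_loss
    (fun n => one_le_GammaAB hαβ (2 ^ n)) (fun _ => one_le_GammaA hα Nat.one_le_two_pow)
    (summable_log_two_pow_div (one_le_GammaAB hαβ 1) (GammaAB_monotone α β) hBrjunoPair)
    (summable_log_two_pow_div (one_le_GammaA hα le_rfl) (GammaA_monotone α) hBrjuno)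
  refine ⟨K, hK, fun aleph haleph l w hl hw => ?_⟩
  obtain rfl : w = dyadicWidth (fun n => GammaAB α β (2 ^ n)) (fun n => GammaA α (2 ^ n)) aleph :=
    funext fun n => by rw [hw, hl, dyadicWidth]
  exact hloss aleph haleph

/-- existence of the sequence of strip-width losses d_n⁰ with summable
total loss, controlled by K₂(1 + log ℵ). -/
theorem stmt_12 (α β : ℝ) (hB1 : BrjunoPairCond α β) :
    ∃ K₂ : ℝ, 0 < K₂ ∧
      ∀ aleph : ℝ, 2 < aleph →
        ∀ l w : ℕ → ℝ,
          (∀ n : ℕ, l n = Real.exp (-(n : ℝ) ^ 2) /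
              (16 * aleph * GammaAB α β (2 ^ n) * GammaA α (2 ^ n) * 2 ^ n)) →
          (∀ n : ℕ, w n = l n / (aleph * 4 ^ n * GammaAB α β (2 ^ n))) →
          ∃ d : ℕ → ℝ, (∀ n : ℕ, 0 < d n) ∧
            (∀ n : ℕ, w (n + 1) / 4 =
              w n * aleph * Real.exp (-(2 * Real.pi * 2 ^ n * d n)) / d n) ∧
            Summable d ∧ (∑' n : ℕ, d n) ≤ K₂ * (1 + Real.log aleph) := by
  obtain ⟨K, hK, h⟩ := stmt_12_general α β hB1
  exact ⟨K, hK, fun aleph haleph =>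
    posLog_eq_log (x := aleph) (by grind) ▸ h aleph (two_pos.trans haleph)⟩
end
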